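/- Let E = EuclideanSpace ℝ (Fin d), let s, t ⊆ E be finite sets, and let P = convexHull ℝ s and Q = convexHull ℝ t. Assume the non-degeneracy condition: for every nonempty exposed face F₁ of P and every nonempty exposed face G₁ of Q, finrank(vectorSpan ℝ (F₁ + G₁)) = finrank(vectorSpan ℝ F₁) + finrank(vectorSpan ℝ G₁). Let F be a nonempty exposed face of P and G a nonempty exposed face of Q such that F + G is an exposed face of P + Q with k := finrank(vectorSpan ℝ (F + G)) satisfying k + 1 < finrank(vectorSpan ℝ (P + Q)). Then either there exists an exposed face F' of P with F ⊆ F' such that F' + G is an exposed face of P + Q containing F + G with finrank(vectorSpan ℝ (F' + G)) = k + 1, or there exists an exposed face G' of Q with G ⊆ G' such that F + G' is an exposed face of P + Q containing F + G with finrank(vectorSpan ℝ (F + G')) = k + 1. -/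

import Mathlib

open Pointwise

/-!
A proper face `F + G` of `P + Q` has an exposed superface `H` of dimension one more. To find
it, pass to the quotient by the direction of `F + G`: the vertices outside the face become nonzero
vectors of a pointed cone, and tilting the functional that exposes the face until it vanishes on an
extreme ray of this cone exposes `H`. The functional exposing `H` also exposes faces `F' ⊇ F` of `P`
and `G' ⊇ G` of `Q` with `H = F' + G'`. Nondegeneracy of `H` leaves room for only one of the
dimensions of `F'` and `G'` to grow, and an exposed face is the trace of its affine span on the
polytope, so the other face does not change.
-/

open Module

theorem lt_of_notMem_toExposed {𝕜 E : Type*} [Ring 𝕜] [LinearOrder 𝕜] [TopologicalSpace 𝕜]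
    [AddCommMonoid E] [TopologicalSpace E] [Module 𝕜 E] {l : StrongDual 𝕜 E} {A : Set E} {a x : E}
    (ha : a ∈ l.toExposed A) (hx : x ∈ A) (hxl : x ∉ l.toExposed A) : l x < l a :=
  lt_of_not_ge fun hax ↦ hxl ⟨hx, fun y hy ↦ (ha.2 y hy).trans hax⟩

section Add

variable {𝕜 E : Type*} [Ring 𝕜] [PartialOrder 𝕜] [IsOrderedRing 𝕜] [TopologicalSpace 𝕜]
  [AddCommMonoid E] [TopologicalSpace E] [Module 𝕜 E] {A B F G H : Set E} {x y : E}

theorem add_mem_toExposed_add_iff (l : StrongDual 𝕜 E) (hx : x ∈ A) (hy : y ∈ B) :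
    x + y ∈ l.toExposed (A + B) ↔ x ∈ l.toExposed A ∧ y ∈ l.toExposed B := by
  constructor
  · rintro ⟨-, hmax⟩
    refine ⟨⟨hx, fun z hz ↦ ?_⟩, ⟨hy, fun z hz ↦ ?_⟩⟩
    · simpa only [map_add, add_le_add_iff_right] using hmax (z + y) (Set.add_mem_add hz hy)
    · simpa only [map_add, add_le_add_iff_left] using hmax (x + z) (Set.add_mem_add hx hz)
  · rintro ⟨⟨-, hxmax⟩, -, hymax⟩
    refine ⟨Set.add_mem_add hx hy, ?_⟩
    rintro _ ⟨x', hx', y', hy', rfl⟩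
    simpa only [map_add] using add_le_add (hxmax x' hx') (hymax y' hy')

theorem toExposed_add (l : StrongDual 𝕜 E) (A B : Set E) :
    l.toExposed (A + B) = l.toExposed A + l.toExposed B := by
  apply Set.Subset.antisymm
  · intro z hz
    obtain ⟨x, hx, y, hy, rfl⟩ := hz.1
    obtain ⟨hxl, hyl⟩ := (add_mem_toExposed_add_iff l hx hy).1 hz
    exact Set.add_mem_add hxl hyl
  · rintro _ ⟨x, hx, y, hy, rfl⟩
    exact (add_mem_toExposed_add_iff l hx.1 hy.1).2 ⟨hx, hy⟩

theorem exists_isExposed_add_eq_of_add_subset (hH : IsExposed 𝕜 (A + B) H) (hFA : F ⊆ A)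
    (hF : F.Nonempty) (hGB : G ⊆ B) (hG : G.Nonempty) (hFGH : F + G ⊆ H) :
    ∃ F' G', IsExposed 𝕜 A F' ∧ IsExposed 𝕜 B G' ∧ F ⊆ F' ∧ G ⊆ G' ∧ F' + G' = H := by
  obtain ⟨l, hl : H = l.toExposed (A + B)⟩ := hH ((hF.add hG).mono hFGH)
  subst hl
  have hmem {x y : E} (hx : x ∈ F) (hy : y ∈ G) : x ∈ l.toExposed A ∧ y ∈ l.toExposed B :=
    (add_mem_toExposed_add_iff l (hFA hx) (hGB hy)).1 (hFGH (Set.add_mem_add hx hy))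
  obtain ⟨x₀, hx₀⟩ := hF
  obtain ⟨y₀, hy₀⟩ := hG
  exact ⟨l.toExposed A, l.toExposed B, ContinuousLinearMap.toExposed.isExposed,
    ContinuousLinearMap.toExposed.isExposed, fun _ hx ↦ (hmem hx hy₀).1,
    fun _ hy ↦ (hmem hx₀ hy).2, (toExposed_add l A B).symm⟩

end Add

section VectorSpan

variable {𝕜 E : Type*} [AddCommGroup E]

theorem vectorSpan_add_le [Ring 𝕜] [Module 𝕜 E] (A B : Set E) :
    vectorSpan 𝕜 (A + B) ≤ vectorSpan 𝕜 A ⊔ vectorSpan 𝕜 B := by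
  refine Submodule.span_le.2 ?_
  rintro _ ⟨_, ⟨a, ha, b, hb, rfl⟩, _, ⟨a', ha', b', hb', rfl⟩, rfl⟩
  simp only [vsub_eq_sub, add_sub_add_comm]
  exact Submodule.add_mem_sup (vsub_mem_vectorSpan 𝕜 ha ha') (vsub_mem_vectorSpan 𝕜 hb hb')

theorem finrank_vectorSpan_add_le [DivisionRing 𝕜] [Module 𝕜 E] (A B : Set E)
    [FiniteDimensional 𝕜 (vectorSpan 𝕜 A)] [FiniteDimensional 𝕜 (vectorSpan 𝕜 B)] :
    finrank 𝕜 (vectorSpan 𝕜 (A + B)) ≤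
      finrank 𝕜 (vectorSpan 𝕜 A) + finrank 𝕜 (vectorSpan 𝕜 B) :=
  (Submodule.finrank_mono (vectorSpan_add_le A B)).trans
    (Submodule.finrank_add_le_finrank_add_finrank _ _)

theorem mem_affineSpan_insert_of_sub_mem_sup [Ring 𝕜] [Module 𝕜 E] {A : Set E} {a v w : E}
    (ha : a ∈ A) (hv : a - v ∈ vectorSpan 𝕜 A ⊔ 𝕜 ∙ (a - w)) :
    v ∈ affineSpan 𝕜 (insert w A) := by
  have haA : a ∈ insert w A := Set.mem_insert_of_mem w ha
  have hle : vectorSpan 𝕜 A ⊔ 𝕜 ∙ (a - w) ≤ vectorSpan 𝕜 (insert w A) :=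
    sup_le (vectorSpan_mono 𝕜 (Set.subset_insert w A)) <|
      (Submodule.span_singleton_le_iff_mem _ _).2
        (vsub_mem_vectorSpan 𝕜 haA (Set.mem_insert w A))
  have hav : a -ᵥ v ∈ (affineSpan 𝕜 (insert w A)).direction := by
    rw [direction_affineSpan]
    exact hle hv
  exact (AffineSubspace.vsub_left_mem_direction_iff_mem (mem_affineSpan 𝕜 haA) v).1 hav

theorem finiteDimensional_vectorSpan_of_subset_convexHull [DivisionRing 𝕜] [PartialOrder 𝕜]
    [Module 𝕜 E] {s A : Set E} (hs : s.Finite) (hA : A ⊆ convexHull 𝕜 s) :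
    FiniteDimensional 𝕜 (vectorSpan 𝕜 A) := by
  have := finiteDimensional_vectorSpan_of_finite 𝕜 hs
  refine Submodule.finiteDimensional_of_le (S₂ := vectorSpan 𝕜 s) ?_
  rw [← direction_affineSpan 𝕜 s, ← affineSpan_convexHull s, direction_affineSpan]
  exact vectorSpan_mono 𝕜 hA

variable [TopologicalSpace 𝕜] [TopologicalSpace E]

theorem vectorSpan_toExposed_le_ker [Ring 𝕜] [PartialOrder 𝕜] [Module 𝕜 E]
    (l : StrongDual 𝕜 E) (A : Set E) :
    vectorSpan 𝕜 (l.toExposed A) ≤ l.toLinearMap.ker := by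
  refine Submodule.span_le.2 ?_
  rintro _ ⟨x, hx, y, hy, rfl⟩
  have hxy : l x = l y := le_antisymm (hy.2 x hx.1) (hx.2 y hy.1)
  simp [hxy]

theorem inter_affineSpan_eq_of_isExposed [Ring 𝕜] [PartialOrder 𝕜] [Module 𝕜 E] {A F : Set E}
    (hF : IsExposed 𝕜 A F) : A ∩ affineSpan 𝕜 F = F := by
  refine Set.Subset.antisymm ?_ (Set.subset_inter hF.subset (subset_affineSpan 𝕜 F))
  rintro x ⟨hxA, hxF⟩
  obtain ⟨a, ha⟩ := (affineSpan_nonempty 𝕜).1 ⟨x, hxF⟩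
  obtain ⟨l, hl : F = l.toExposed A⟩ := hF ⟨a, ha⟩
  subst hl
  have hker : l (x - a) = 0 := vectorSpan_toExposed_le_ker l A <|
    vsub_mem_vectorSpan_of_mem_affineSpan_of_mem_affineSpan hxF (mem_affineSpan 𝕜 ha)
  have hxa : l x = l a := by rwa [map_sub, sub_eq_zero] at hker
  exact ⟨hxA, fun y hy ↦ hxa ▸ ha.2 y hy⟩

theorem eq_of_isExposed_of_finrank_le [DivisionRing 𝕜] [PartialOrder 𝕜] [Module 𝕜 E]
    {A B F : Set E} [FiniteDimensional 𝕜 (vectorSpan 𝕜 B)] (hF : IsExposed 𝕜 A F)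
    (hne : F.Nonempty) (hFB : F ⊆ B) (hBA : B ⊆ A)
    (hdim : finrank 𝕜 (vectorSpan 𝕜 B) ≤ finrank 𝕜 (vectorSpan 𝕜 F)) : F = B := by
  have hspan : affineSpan 𝕜 F = affineSpan 𝕜 B :=
    AffineSubspace.eq_of_direction_eq_of_nonempty_of_le
      (by simpa only [direction_affineSpan] using
        Submodule.eq_of_le_of_finrank_le (vectorSpan_mono 𝕜 hFB) hdim)
      ((affineSpan_nonempty 𝕜).2 hne) (affineSpan_mono 𝕜 hFB)
  refine hFB.antisymm ?_
  rw [← inter_affineSpan_eq_of_isExposed hF, hspan]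
  exact Set.subset_inter hBA (subset_affineSpan 𝕜 B)

end VectorSpan

section Functionals

variable {𝕜 E : Type*} [Field 𝕜] [AddCommGroup E] [Module 𝕜 E]

theorem exists_dual_injOn [Infinite 𝕜] {S : Set E} (hS : S.Finite) :
    ∃ f : Dual 𝕜 E, Set.InjOn f S := by
  have := hS.to_subtype
  let Pair := {p : S × S // p.1 ≠ p.2}
  obtain ⟨f, hf⟩ := exists_dual_forall_apply_ne_zero (K := 𝕜)
    (fun p : Pair ↦ (p.1.1 : E) - p.1.2) fun p ↦ sub_ne_zero.2 (Subtype.coe_ne_coe.2 p.2)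
  refine ⟨f, fun x hx y hy hxy ↦ ?_⟩
  by_contra hne
  exact hf ⟨(⟨x, hx⟩, ⟨y, hy⟩), fun h ↦ hne (congrArg Subtype.val h)⟩ (by simp [hxy])

theorem exists_strongDual_eqOn [TopologicalSpace 𝕜] [IsTopologicalRing 𝕜]
    [TopologicalSpace E] [SeparatingDual 𝕜 E] (f : Dual 𝕜 E) (W : Submodule 𝕜 E)
    [FiniteDimensional 𝕜 W] :
    ∃ m : StrongDual 𝕜 E, Set.EqOn m f W := by
  obtain ⟨m, hm⟩ :=
    SeparatingDual.dualMap_surjective_iff.2 W.injective_subtype (f.domRestrict W)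
  exact ⟨m, fun x hx ↦ LinearMap.congr_fun hm ⟨x, hx⟩⟩

end Functionals

section Polytope

variable {𝕜 E : Type*} [Field 𝕜] [LinearOrder 𝕜] [IsStrictOrderedRing 𝕜]
  [AddCommGroup E] [Module 𝕜 E]

/-- The extreme ray through `w` is found as the vertex of the hyperplane section `{l = 1}` of the
cone generated by `N` that minimizes a generic functional. -/
theorem exists_dual_nonneg_forall_mem_span_singleton {N : Set E} (hN : N.Finite)
    (hne : N.Nonempty) (l : Dual 𝕜 E) (hl : ∀ v ∈ N, 0 < l v) :
    ∃ f : Dual 𝕜 E, (∀ v ∈ N, 0 ≤ f v) ∧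
      ∃ w ∈ N, f w = 0 ∧ ∀ v ∈ N, f v = 0 → v ∈ 𝕜 ∙ w := by
  let u : E → E := fun v ↦ (l v)⁻¹ • v
  have hu : ∀ v ∈ N, l v • u v = v := fun v hv ↦ smul_inv_smul₀ (hl v hv).ne' v
  obtain ⟨g, hg⟩ := exists_dual_injOn (𝕜 := 𝕜) (hN.image u)
  obtain ⟨w, hw, hmin⟩ := Set.exists_min_image N (fun v ↦ g (u v)) hN hne
  let f : Dual 𝕜 E := g - g (u w) • l
  have hf : ∀ v ∈ N, f v = l v * (g (u v) - g (u w)) := fun v hv ↦ by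
    have hgv : g v = l v * g (u v) := by
      conv_lhs => rw [← hu v hv, map_smul, smul_eq_mul]
    simp only [f, LinearMap.sub_apply, LinearMap.smul_apply, smul_eq_mul, hgv]
    ring
  refine ⟨f, fun v hv ↦ ?_, w, hw, by rw [hf w hw, sub_self, mul_zero], fun v hv hfv ↦ ?_⟩
  · exact hf v hv ▸ mul_nonneg (hl v hv).le (sub_nonneg.2 (hmin v hv))
  · have hguv : g (u v) = g (u w) :=
      sub_eq_zero.1 ((mul_eq_zero.1 (hf v hv ▸ hfv)).resolve_left (hl v hv).ne')
    have huv : u v = u w := hg (Set.mem_image_of_mem u hv) (Set.mem_image_of_mem u hw) hguv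
    rw [← hu v hv, huv]
    exact Submodule.smul_mem _ _ (Submodule.smul_mem _ _ (Submodule.mem_span_singleton_self w))

theorem exists_dual_nonneg_forall_mem_sup_span_singleton {N : Set E} (hN : N.Finite)
    (hne : N.Nonempty) (l : Dual 𝕜 E) (hl : ∀ v ∈ N, 0 < l v) {L : Submodule 𝕜 E}
    (hL : L ≤ l.ker) :
    ∃ f : Dual 𝕜 E, L ≤ f.ker ∧ (∀ v ∈ N, 0 ≤ f v) ∧
      ∃ w ∈ N, f w = 0 ∧ ∀ v ∈ N, f v = 0 → v ∈ L ⊔ 𝕜 ∙ w := by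
  obtain ⟨f, hf, _, ⟨w, hw, rfl⟩, hfw, hspan⟩ :=
    exists_dual_nonneg_forall_mem_span_singleton (hN.image L.mkQ) (hne.image L.mkQ)
      (L.liftQ l hL) (Set.forall_mem_image.2 hl)
  refine ⟨f ∘ₗ L.mkQ, fun x hx ↦ ?_, fun v hv ↦ hf _ (Set.mem_image_of_mem _ hv), w, hw, hfw,
    fun v hv hfv ↦ ?_⟩
  · rw [LinearMap.mem_ker, LinearMap.comp_apply, (L.mkQ_apply x).trans
      ((Submodule.Quotient.mk_eq_zero L).2 hx), map_zero]
  · have hv' : L.mkQ v ∈ (𝕜 ∙ w).map L.mkQ := by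
      rw [Submodule.map_span, Set.image_singleton]
      exact hspan _ (Set.mem_image_of_mem _ hv) hfv
    rwa [← Submodule.mem_comap, Submodule.comap_map_mkQ] at hv'

theorem subset_convexHull_inter_of_isExtreme {s F : Set E}
    (hF : IsExtreme 𝕜 (convexHull 𝕜 s) F) : F ⊆ convexHull 𝕜 (s ∩ F) := by
  have hdiff : convexHull 𝕜 (s \ F) ⊆ convexHull 𝕜 s \ F :=
    convexHull_min (Set.sdiff_subset_sdiff_left (subset_convexHull 𝕜 s))
      (hF.convex_sdiff (convex_convexHull 𝕜 s))
  intro x hx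
  have hxs : x ∈ convexHull 𝕜 (s ∩ F ∪ s \ F) := by
    rw [Set.inter_union_sdiff]
    exact hF.subset hx
  rcases (s ∩ F).eq_empty_or_nonempty with hin | hin
  · rw [hin, Set.empty_union] at hxs
    exact absurd hx (hdiff hxs).2
  rcases (s \ F).eq_empty_or_nonempty with hout | hout
  · rwa [hout, Set.union_empty] at hxs
  rw [convexHull_union hin hout, mem_convexJoin] at hxs
  obtain ⟨y, hy, z, hz, hxyz⟩ := hxs
  have hys : y ∈ convexHull 𝕜 s := convexHull_mono Set.inter_subset_left hy
  rw [← insert_endpoints_openSegment] at hxyz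
  rcases hxyz with rfl | rfl | hxyz
  · exact hy
  · exact absurd hx (hdiff hz).2
  · exact absurd (hF.right_mem_of_mem_openSegment hys (hdiff hz).1 hx hxyz) (hdiff hz).2

variable [TopologicalSpace 𝕜] [IsTopologicalRing 𝕜] [TopologicalSpace E] [SeparatingDual 𝕜 E]

theorem exists_strongDual_le_forall_mem_affineSpan_insert {s A : Set E} (hs : s.Finite)
    (hA : IsExposed 𝕜 (convexHull 𝕜 s) A) {a : E} (ha : a ∈ A) (hsA : ¬s ⊆ A) :
    ∃ m : StrongDual 𝕜 E, (∀ x ∈ A, m x = m a) ∧ (∀ v ∈ s, m v ≤ m a) ∧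
      ∃ w ∈ s \ A, m w = m a ∧ ∀ v ∈ s \ A, m v = m a → v ∈ affineSpan 𝕜 (insert w A) := by
  obtain ⟨l, hl : A = l.toExposed (convexHull 𝕜 s)⟩ := hA ⟨a, ha⟩
  have hpos : ∀ v ∈ s \ A, 0 < l (a - v) := fun v hv ↦ by
    rw [map_sub, sub_pos]
    exact lt_of_notMem_toExposed (hl ▸ ha) (subset_convexHull 𝕜 s hv.1) (hl ▸ hv.2)
  obtain ⟨f, hfA, hf, _, ⟨w, hw, rfl⟩, hfw, hspan⟩ :=
    exists_dual_nonneg_forall_mem_sup_span_singleton (hs.sdiff.image (a - ·))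
      ((Set.sdiff_nonempty.2 hsA).image (a - ·)) l.toLinearMap (Set.forall_mem_image.2 hpos)
      (L := vectorSpan 𝕜 A) (hl ▸ vectorSpan_toExposed_le_ker l _)
  have := finiteDimensional_vectorSpan_of_subset_convexHull hs (subset_refl (convexHull 𝕜 s))
  obtain ⟨m, hm⟩ := exists_strongDual_eqOn f (vectorSpan 𝕜 (convexHull 𝕜 s))
  have hmf {x : E} (hx : x ∈ convexHull 𝕜 s) : m a - m x = f (a - x) := by
    rw [← map_sub]
    exact hm (vsub_mem_vectorSpan 𝕜 (hA.subset ha) hx)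
  have hmv {v : E} (hv : v ∈ s) : m a - m v = f (a - v) := hmf (subset_convexHull 𝕜 s hv)
  have hmA : ∀ x ∈ A, m x = m a := fun x hx ↦ by
    rw [eq_comm, ← sub_eq_zero, hmf (hA.subset hx)]
    exact hfA (vsub_mem_vectorSpan 𝕜 ha hx)
  refine ⟨m, hmA, fun v hv ↦ ?_, w, hw, ?_, fun v hv hmva ↦ ?_⟩
  · by_cases hvA : v ∈ A
    · exact (hmA v hvA).le
    · rw [← sub_nonneg, hmv hv]
      exact hf _ (Set.mem_image_of_mem _ ⟨hv, hvA⟩)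
  · rw [eq_comm, ← sub_eq_zero, hmv hw.1, hfw]
  · have hfv : f (a - v) = 0 := by rw [← hmv hv.1, hmva, sub_self]
    exact mem_affineSpan_insert_of_sub_mem_sup ha (hspan _ (Set.mem_image_of_mem _ hv) hfv)

theorem exists_isExposed_superset_finrank_eq_add_one {s A : Set E} (hs : s.Finite)
    (hA : IsExposed 𝕜 (convexHull 𝕜 s) A) (hne : A.Nonempty) (hproper : A ≠ convexHull 𝕜 s) :
    ∃ B, IsExposed 𝕜 (convexHull 𝕜 s) B ∧ A ⊆ B ∧
      finrank 𝕜 (vectorSpan 𝕜 B) = finrank 𝕜 (vectorSpan 𝕜 A) + 1 := by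
  obtain ⟨a, ha⟩ := hne
  have hsA : ¬s ⊆ A := fun h ↦ hproper <|
    hA.subset.antisymm (convexHull_min h (hA.convex (convex_convexHull 𝕜 s)))
  obtain ⟨m, hmA, hms, w, hw, hmw, hspan⟩ :=
    exists_strongDual_le_forall_mem_affineSpan_insert hs hA ha hsA
  have hmax : ∀ x ∈ convexHull 𝕜 s, m x ≤ m a :=
    convexHull_min hms (convex_halfSpace_le m.toLinearMap.isLinear (m a))
  let B : Set E := m.toExposed (convexHull 𝕜 s)
  have hB : IsExposed 𝕜 (convexHull 𝕜 s) B := ContinuousLinearMap.toExposed.isExposed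
  have hmemB {x : E} (hx : x ∈ convexHull 𝕜 s) (hmx : m x = m a) : x ∈ B :=
    ⟨hx, fun y hy ↦ (hmax y hy).trans hmx.ge⟩
  have hAB : A ⊆ B := fun x hx ↦ hmemB (hA.subset hx) (hmA x hx)
  have hwB : w ∈ B := hmemB (subset_convexHull 𝕜 s hw.1) hmw
  have hsB : s ∩ B ⊆ affineSpan 𝕜 (insert w A) := fun v ⟨hvs, hvB⟩ ↦ by
    by_cases hvA : v ∈ A
    · exact mem_affineSpan 𝕜 (Set.mem_insert_of_mem w hvA)
    · exact hspan v ⟨hvs, hvA⟩ ((hms v hvs).antisymm (hvB.2 a (hA.subset ha)))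
  have hBspan : B ⊆ affineSpan 𝕜 (insert w A) :=
    (subset_convexHull_inter_of_isExtreme hB.isExtreme).trans
      (convexHull_min hsB (affineSpan 𝕜 (insert w A)).convex)
  have hfdB := finiteDimensional_vectorSpan_of_subset_convexHull hs hB.subset
  have hfdA := finiteDimensional_vectorSpan_of_subset_convexHull hs hA.subset
  refine ⟨B, hB, hAB, le_antisymm ?_ ?_⟩
  · have hle : vectorSpan 𝕜 B ≤ vectorSpan 𝕜 (insert w A) := by
      rw [← direction_affineSpan 𝕜 B, ← direction_affineSpan 𝕜 (insert w A)]
      exact AffineSubspace.direction_le (affineSpan_le.2 hBspan)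
    exact (Submodule.finrank_mono hle).trans (finrank_vectorSpan_insert_le_set 𝕜 A w)
  · refine Nat.succ_le_of_lt (lt_of_not_ge fun hdim ↦ hw.2 ?_)
    rwa [eq_of_isExposed_of_finrank_le hA ⟨a, ha⟩ hAB hB.subset hdim]

theorem superface_minkowski_sum_general {s t F G : Set E} (hs : s.Finite) (ht : t.Finite)
    (hF : IsExposed 𝕜 (convexHull 𝕜 s) F) (hFne : F.Nonempty)
    (hG : IsExposed 𝕜 (convexHull 𝕜 t) G) (hGne : G.Nonempty)
    (hFG : IsExposed 𝕜 (convexHull 𝕜 s + convexHull 𝕜 t) (F + G))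
    (hproper : F + G ≠ convexHull 𝕜 s + convexHull 𝕜 t)
    (hnd : ∀ F' G', IsExposed 𝕜 (convexHull 𝕜 s) F' → IsExposed 𝕜 (convexHull 𝕜 t) G' →
      F ⊆ F' → G ⊆ G' → IsExposed 𝕜 (convexHull 𝕜 s + convexHull 𝕜 t) (F' + G') →
      finrank 𝕜 (vectorSpan 𝕜 (F' + G')) = finrank 𝕜 (vectorSpan 𝕜 (F + G)) + 1 →
      finrank 𝕜 (vectorSpan 𝕜 (F' + G')) =
        finrank 𝕜 (vectorSpan 𝕜 F') + finrank 𝕜 (vectorSpan 𝕜 G')) :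
    (∃ F', IsExposed 𝕜 (convexHull 𝕜 s) F' ∧ F ⊆ F' ∧
        IsExposed 𝕜 (convexHull 𝕜 s + convexHull 𝕜 t) (F' + G) ∧ F + G ⊆ F' + G ∧
        finrank 𝕜 (vectorSpan 𝕜 (F' + G)) = finrank 𝕜 (vectorSpan 𝕜 (F + G)) + 1) ∨
      (∃ G', IsExposed 𝕜 (convexHull 𝕜 t) G' ∧ G ⊆ G' ∧
        IsExposed 𝕜 (convexHull 𝕜 s + convexHull 𝕜 t) (F + G') ∧ F + G ⊆ F + G' ∧
        finrank 𝕜 (vectorSpan 𝕜 (F + G')) = finrank 𝕜 (vectorSpan 𝕜 (F + G)) + 1) := by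
  obtain ⟨H, hH, hFGH, hdimH⟩ : ∃ H, IsExposed 𝕜 (convexHull 𝕜 s + convexHull 𝕜 t) H ∧
      F + G ⊆ H ∧ finrank 𝕜 (vectorSpan 𝕜 H) = finrank 𝕜 (vectorSpan 𝕜 (F + G)) + 1 := by
    rw [← convexHull_add] at hFG hproper ⊢
    exact exists_isExposed_superset_finrank_eq_add_one (hs.add ht) hFG (hFne.add hGne) hproper
  obtain ⟨F', G', hF', hG', hFF', hGG', rfl⟩ :=
    exists_isExposed_add_eq_of_add_subset hH hF.subset hFne hG.subset hGne hFGH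
  have hfdF := finiteDimensional_vectorSpan_of_subset_convexHull hs hF.subset
  have hfdG := finiteDimensional_vectorSpan_of_subset_convexHull ht hG.subset
  have hfdF' := finiteDimensional_vectorSpan_of_subset_convexHull hs hF'.subset
  have hfdG' := finiteDimensional_vectorSpan_of_subset_convexHull ht hG'.subset
  have hsum := hnd F' G' hF' hG' hFF' hGG' hH hdimH
  have hsub := finrank_vectorSpan_add_le (𝕜 := 𝕜) F G
  rcases le_or_gt (finrank 𝕜 (vectorSpan 𝕜 G')) (finrank 𝕜 (vectorSpan 𝕜 G)) with hdimG | hdimG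
  · obtain rfl := eq_of_isExposed_of_finrank_le hG hGne hGG' hG'.subset hdimG
    exact Or.inl ⟨F', hF', hFF', hH, hFGH, hdimH⟩
  · obtain rfl := eq_of_isExposed_of_finrank_le hF hFne hFF' hF'.subset (by lia)
    exact Or.inr ⟨G', hG', hGG', hH, hFGH, hdimH⟩

end Polytope

theorem superface_minkowski_sum {d : ℕ} (s t : Set (EuclideanSpace ℝ (Fin d)))
    (hs : s.Finite) (ht : t.Finite)
    (P Q : Set (EuclideanSpace ℝ (Fin d)))
    (hP : P = convexHull ℝ s) (hQ : Q = convexHull ℝ t)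
    (hnd : ∀ F₁ G₁ : Set (EuclideanSpace ℝ (Fin d)),
      F₁.Nonempty → IsExposed ℝ P F₁ → G₁.Nonempty → IsExposed ℝ Q G₁ →
      Module.finrank ℝ (vectorSpan ℝ (F₁ + G₁)) =
        Module.finrank ℝ (vectorSpan ℝ F₁) + Module.finrank ℝ (vectorSpan ℝ G₁))
    (F G : Set (EuclideanSpace ℝ (Fin d)))
    (hF : IsExposed ℝ P F) (hFne : F.Nonempty)
    (hG : IsExposed ℝ Q G) (hGne : G.Nonempty)
    (hFG : IsExposed ℝ (P + Q) (F + G))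
    (k : ℕ) (hk : k = Module.finrank ℝ (vectorSpan ℝ (F + G)))
    (hlt : k + 1 < Module.finrank ℝ (vectorSpan ℝ (P + Q))) :
    (∃ F' : Set (EuclideanSpace ℝ (Fin d)), IsExposed ℝ P F' ∧ F ⊆ F' ∧
        IsExposed ℝ (P + Q) (F' + G) ∧ F + G ⊆ F' + G ∧
        Module.finrank ℝ (vectorSpan ℝ (F' + G)) = k + 1) ∨
      (∃ G' : Set (EuclideanSpace ℝ (Fin d)), IsExposed ℝ Q G' ∧ G ⊆ G' ∧
        IsExposed ℝ (P + Q) (F + G') ∧ F + G ⊆ F + G' ∧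
        Module.finrank ℝ (vectorSpan ℝ (F + G')) = k + 1) := by
  subst hP hQ hk
  exact superface_minkowski_sum_general hs ht hF hFne hG hGne hFG
    (fun h ↦ hlt.not_ge (h ▸ Nat.le_succ _))
    fun F' G' hF' hG' hFF' hGG' _ _ ↦ hnd F' G' (hFne.mono hFF') hF' (hGne.mono hGG') hG'
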